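/- (Corollary 7, multi-task learning.) Suppose Y = XB* + W ∈ ℝ^{n×m} where X ∈ ℝ^{n×p} satisfies det(XᵀX) > 0, the columns of B* satisfy B*_{*j} = Q*_{*z*(j)} for some Q* ∈ ℝ^{p×k*} and z* ∈ [k*]^m, and W is sub-Gaussian with parameter ρ. Then for any constants λ, ρ > 0 and any sufficiently small constant δ ∈ (0,1), there exists a constant D_{λ,δ,ρ} > 0 depending only on λ, δ, ρ such that for every D > D_{λ,δ,ρ} there exist constants M, C', C'' > 0 depending only on λ, δ, ρ, D with: E Π( pk + m log k > (1+δ)(pk* + m log k*) | Y ) ≤ exp(−C'(pk* + m log k*)) and E Π( ‖XB − XB*‖_F² > M(pk* + m log k*) | Y ) ≤ exp(−C''(pk* + m log k*)). -/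

import Mathlib

open MeasureTheory Real Matrix
open scoped ENNReal Classical

/-- Euclidean norm of a finitely-indexed real vector. -/
noncomputable def enr {ι : Type*} [Fintype ι] (v : ι → ℝ) : ℝ :=
  Real.sqrt (∑ i, v i ^ 2)

/-- Euclidean inner product. -/
noncomputable def ipr {ι : Type*} [Fintype ι] (u v : ι → ℝ) : ℝ :=
  ∑ i, u i * v i

/-- Sub-Gaussian condition (2.2): `P(|⟨W,K⟩| > t) ≤ exp(-ρ t²/2)` for every unit vector `K`. -/
def subG {ι Ω : Type*} [Fintype ι] [MeasurableSpace Ω] (P : Measure Ω) (ρ : ℝ)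
    (W : Ω → ι → ℝ) : Prop :=
  ∀ K : ι → ℝ, enr K = 1 → ∀ t : ℝ, 0 < t →
    P {ω | t < |ipr (W ω) K|} ≤ ENNReal.ofReal (Real.exp (-ρ * t ^ 2 / 2))

/-- Determinant of the Gram matrix `AᵀA`. -/
noncomputable def gramDet {N κ : Type*} [Fintype N] [Fintype κ] [DecidableEq κ]
    (A : Matrix N κ ℝ) : ℝ := (Aᵀ * A).det

/-- Generic posterior probability for a structured linear model.
`ι` indexes the models (structures), `κ i` the coordinates of the parameter of model `i`,
`A i` is the matrix of the linear operator `𝒳` of model `i`, `w i` the model-selection prior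
weight (with the Gamma-correction already cancelled against the Laplace normalizing constant),
`emb i` maps a parameter to the object the posterior statement is about, `Y` is the data,
`Sel` restricts the model index and `U` the embedded parameter. -/
noncomputable def gpostP {Θ N ι : Type*} [Fintype N] [Fintype ι]
    {κ : ι → Type*} [∀ i, Fintype (κ i)] [∀ i, DecidableEq (κ i)]
    (w : ι → ℝ) (A : (i : ι) → Matrix N (κ i) ℝ)
    (emb : (i : ι) → (κ i → ℝ) → Θ) (lam : ℝ) (Y : N → ℝ)
    (Sel : Set ι) (U : Set Θ) : ℝ :=
  (∑ i : ι, (if i ∈ Sel then w i else 0) * Real.sqrt (gramDet (A i)) *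
      (lam / Real.sqrt π) ^ Fintype.card (κ i) *
      ∫ Q in {Q : κ i → ℝ | emb i Q ∈ U},
        Real.exp (-(1/2) * (enr fun t => Y t - (A i).mulVec Q t) ^ 2
          - lam * enr ((A i).mulVec Q))) /
  (∑ i : ι, w i * Real.sqrt (gramDet (A i)) *
      (lam / Real.sqrt π) ^ Fintype.card (κ i) *
      ∫ Q : κ i → ℝ,
        Real.exp (-(1/2) * (enr fun t => Y t - (A i).mulVec Q t) ^ 2
          - lam * enr ((A i).mulVec Q)))

/-- The design matrix of the multi-task learning model: it maps `Q ∈ ℝ^{p×k}` to the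
fitted matrix `XB` with columns `B_{*j} = Q_{*z(j)}`. -/
noncomputable def mtX {n p : ℕ} (m k : ℕ) (X : Matrix (Fin n) (Fin p) ℝ)
    (z : Fin m → Fin k) : Matrix (Fin n × Fin m) (Fin p × Fin k) ℝ :=
  fun a b => if z a.2 = b.2 then X a.1 b.1 else 0

/-- The posterior distribution of the multi-task learning prior: `k` is sampled with
weight proportional to `(Γ(pk)/Γ(pk/2)) exp(-D(pk + m log k))` on `[p]`, `z` uniformly
from `[k]^m`, `Q` from the elliptical Laplace density `∝ exp(-λ√(Σ_j ‖XQ_{*z(j)}‖²))`, and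
the Gaussian pseudo-likelihood `∝ exp(-½‖Y - XB‖_F²)` is used; `K` restricts the number
of clusters `k` and `U` restricts the fitted matrix `XB`.  (The Gamma correction factor
has been cancelled.) -/
noncomputable def mtPost (n p m : ℕ) (X : Matrix (Fin n) (Fin p) ℝ) (D lam : ℝ)
    (Y : Fin n × Fin m → ℝ) (K : Set ℕ) (U : Set (Fin n × Fin m → ℝ)) : ℝ :=
  gpostP
    (fun i : Σ k : Fin p, (Fin m → Fin ((k : ℕ) + 1)) =>
      Real.exp (-D * ((p : ℝ) * (((i.1 : ℕ) + 1 : ℕ) : ℝ)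
          + (m : ℝ) * Real.log (((i.1 : ℕ) + 1 : ℕ)))) *
        ((((i.1 : ℕ) + 1 : ℕ) : ℝ) ^ m)⁻¹)
    (fun i => mtX m ((i.1 : ℕ) + 1) X i.2)
    (fun i Q => (mtX m ((i.1 : ℕ) + 1) X i.2).mulVec Q)
    lam Y {i | ((i.1 : ℕ) + 1) ∈ K} U

lemma enr_eq_norm {ι : Type*} [Fintype ι] (v : ι → ℝ) : enr v = ‖WithLp.toLp 2 v‖ := by
  simp [enr, EuclideanSpace.norm_eq]

lemma ipr_eq_inner {ι : Type*} [Fintype ι] (u v : ι → ℝ) :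
    ipr u v = inner ℝ (WithLp.toLp 2 u) (WithLp.toLp 2 v) := by
  simp [ipr, PiLp.inner_apply, mul_comm]

lemma enr_sq {ι : Type*} [Fintype ι] (v : ι → ℝ) : enr v ^ 2 = ∑ i, v i ^ 2 := by
  rw [enr, Real.sq_sqrt (Finset.sum_nonneg fun i _ => sq_nonneg _)]

lemma enr_nonneg {ι : Type*} [Fintype ι] (v : ι → ℝ) : 0 ≤ enr v := Real.sqrt_nonneg _

lemma enr_add_le {ι : Type*} [Fintype ι] (u v : ι → ℝ) : enr (u + v) ≤ enr u + enr v := by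
  simp only [enr_eq_norm, WithLp.toLp_add]; exact norm_add_le _ _

lemma enr_neg {ι : Type*} [Fintype ι] (v : ι → ℝ) : enr (-v) = enr v := by
  simp [enr]

lemma enr_sq_sub {ι : Type*} [Fintype ι] (u v : ι → ℝ) :
    enr (u - v) ^ 2 = enr u ^ 2 - 2 * ipr u v + enr v ^ 2 := by
  simp only [enr_sq, ipr, Finset.mul_sum, ← Finset.sum_sub_distrib, ← Finset.sum_add_distrib]
  refine Finset.sum_congr rfl fun i _ => ?_
  simp; ring

lemma continuous_enr {ι : Type*} [Fintype ι] : Continuous (enr : (ι → ℝ) → ℝ) := by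
  unfold enr; fun_prop

lemma continuous_mulVec' {N κ : Type*} [Fintype N] [Fintype κ] (A : Matrix N κ ℝ) :
    Continuous (fun Q : κ → ℝ => A.mulVec Q) := by
  fun_prop

lemma gramDet_nonneg {N κ : Type*} [Fintype N] [Fintype κ] [DecidableEq κ]
    (A : Matrix N κ ℝ) : 0 ≤ gramDet A := by
  have := (Matrix.posSemidef_conjTranspose_mul_self A).det_nonneg
  simpa [gramDet, Matrix.conjTranspose_eq_transpose_of_trivial] using this

lemma enr_mulVec_sq {N κ : Type*} [Fintype N] [Fintype κ]
    (A : Matrix N κ ℝ) (Q : κ → ℝ) : enr (A.mulVec Q) ^ 2 = Q ⬝ᵥ ((Aᵀ * A).mulVec Q) := by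
  rw [enr_sq, ← Matrix.mulVec_mulVec, Matrix.dotProduct_mulVec, Matrix.vecMul_transpose]
  simp [dotProduct, sq]

open scoped MatrixOrder in
lemma exists_square {N κ : Type*} [Fintype N] [Fintype κ] [DecidableEq κ]
    (A : Matrix N κ ℝ) : ∃ S : Matrix κ κ ℝ, |S.det| = Real.sqrt (gramDet A) ∧
      ∀ Q, enr (A.mulVec Q) ^ 2 = enr (S.mulVec Q) ^ 2 := by
  obtain ⟨S, hS⟩ := CStarAlgebra.nonneg_iff_eq_star_mul_self.mp
    (Matrix.posSemidef_conjTranspose_mul_self A).nonneg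
  have hS' : Aᵀ * A = Sᵀ * S := by
    simpa [Matrix.star_eq_conjTranspose, Matrix.conjTranspose_eq_transpose_of_trivial] using hS
  refine ⟨S, ?_, fun Q => by rw [enr_mulVec_sq, enr_mulVec_sq, hS']⟩
  rw [gramDet, hS', Matrix.det_mul, Matrix.det_transpose, ← sq, Real.sqrt_sq_eq_abs]

lemma gauss0 {κ : Type*} [Fintype κ] {b : ℝ} (hb : 0 < b) :
    Integrable (fun Q : κ → ℝ => Real.exp (-b * enr Q ^ 2)) ∧
    ∫ Q : κ → ℝ, Real.exp (-b * enr Q ^ 2) = Real.sqrt (π / b) ^ Fintype.card κ := by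
  have h : (fun Q : κ → ℝ => Real.exp (-b * enr Q ^ 2)) =
      fun Q => ∏ i, Real.exp (-b * Q i ^ 2) := by
    funext Q
    rw [← Real.exp_sum, enr_sq, Finset.mul_sum]
  rw [h]
  constructor
  · exact Integrable.fintype_prod (f := fun _ x => Real.exp (-b * x ^ 2))
      fun i => integrable_exp_neg_mul_sq hb
  · rw [integral_fintype_prod_volume_eq_pow (fun x : ℝ => Real.exp (-b * x ^ 2)),
      integral_gaussian]

lemma gauss {N κ : Type*} [Fintype N] [Fintype κ] [DecidableEq κ]
    (A : Matrix N κ ℝ) (hA : 0 < gramDet A) {b : ℝ} (hb : 0 < b) :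
    Integrable (fun Q : κ → ℝ => Real.exp (-b * enr (A.mulVec Q) ^ 2)) ∧
    Real.sqrt (gramDet A) * ∫ Q : κ → ℝ, Real.exp (-b * enr (A.mulVec Q) ^ 2)
      = Real.sqrt (π / b) ^ Fintype.card κ := by
  obtain ⟨S, hdet, hS⟩ := exists_square A
  simp only [hS, ← hdet]
  have hS0 : S.det ≠ 0 := by
    rw [← abs_pos, hdet]; exact Real.sqrt_pos.mpr hA
  have hmap := Real.map_matrix_volume_pi_eq_smul_volume_pi hS0
  have hm : Measurable (Matrix.toLin' S) := (continuous_mulVec' S).measurable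
  have hc : Continuous (fun Q : κ → ℝ => Real.exp (-b * enr Q ^ 2)) := by
    have := continuous_enr (ι := κ); fun_prop
  obtain ⟨g1, g2⟩ := gauss0 (κ := κ) hb
  constructor
  · have := (integrable_map_measure (f := Matrix.toLin' S) (μ := volume)
      (g := fun Q : κ → ℝ => Real.exp (-b * enr Q ^ 2)) hc.aestronglyMeasurable hm.aemeasurable).mp
      (by rw [hmap]; exact g1.smul_measure ENNReal.ofReal_ne_top)
    simpa [Function.comp_def] using this
  · have := integral_map (φ := Matrix.toLin' S) (μ := volume)
      (f := fun Q : κ → ℝ => Real.exp (-b * enr Q ^ 2)) hm.aemeasurable hc.aestronglyMeasurable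
    rw [hmap, integral_smul_measure, g2] at this
    simp only [Matrix.toLin'_apply] at this
    rw [← this, ENNReal.toReal_ofReal (abs_nonneg _), abs_inv, smul_eq_mul, ← mul_assoc,
      mul_inv_cancel₀ (abs_pos.mpr hS0).ne', one_mul]

noncomputable def dens {N κ : Type*} [Fintype N] [Fintype κ]
    (A : Matrix N κ ℝ) (lam : ℝ) (Y : N → ℝ) (Q : κ → ℝ) : ℝ :=
  Real.exp (-(1/2) * (enr fun t => Y t - A.mulVec Q t) ^ 2 - lam * enr (A.mulVec Q))

lemma continuous_dens {N κ : Type*} [Fintype N] [Fintype κ]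
    (A : Matrix N κ ℝ) (lam : ℝ) (Y : N → ℝ) : Continuous (dens A lam Y) := by
  have h1 := continuous_enr (ι := N)
  have h2 := continuous_mulVec' A
  have h3 : Continuous (fun Q : κ → ℝ => fun t => Y t - A.mulVec Q t) := by
    have : (fun Q : κ → ℝ => fun t => Y t - A.mulVec Q t) = fun Q => Y - A.mulVec Q := rfl
    rw [this]; fun_prop
  unfold dens
  have h4 := h1.comp h3
  have h5 := h1.comp h2
  simp only [Function.comp_def] at h4 h5
  fun_prop

lemma dens_pos {N κ : Type*} [Fintype N] [Fintype κ]
    (A : Matrix N κ ℝ) (lam : ℝ) (Y : N → ℝ) (Q : κ → ℝ) : 0 < dens A lam Y Q := Real.exp_pos _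

lemma integrable_dens {N κ : Type*} [Fintype N] [Fintype κ] [DecidableEq κ]
    (A : Matrix N κ ℝ) (hA : 0 < gramDet A) (lam : ℝ) (hl : 0 < lam) (Y : N → ℝ) :
    Integrable (dens A lam Y) := by
  have h := ((gauss A hA (b := 1/4) (by norm_num)).1).const_mul (Real.exp ((1/2) * enr Y ^ 2))
  refine h.mono' (continuous_dens A lam Y).aestronglyMeasurable (Filter.Eventually.of_forall ?_)
  intro Q
  rw [Real.norm_of_nonneg (dens_pos _ _ _ _).le, dens, ← Real.exp_add]
  apply Real.exp_le_exp.mpr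
  have h1 : 0 ≤ lam * enr (A.mulVec Q) := mul_nonneg hl.le (enr_nonneg _)
  have h2 : (enr fun t => Y t - A.mulVec Q t) ^ 2 = enr (Y - A.mulVec Q) ^ 2 := rfl
  have h3 := enr_sq_sub ((2:ℝ) • Y) (A.mulVec Q)
  have h4 : enr ((2:ℝ) • Y) ^ 2 = 4 * enr Y ^ 2 := by
    simp [enr_sq, Finset.mul_sum, mul_pow]; norm_num
  have h5 : ipr ((2:ℝ) • Y) (A.mulVec Q) = 2 * ipr Y (A.mulVec Q) := by
    simp [ipr, Finset.mul_sum, mul_assoc]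
  rw [h4, h5] at h3
  rw [h2, enr_sq_sub]
  nlinarith [sq_nonneg (enr ((2:ℝ) • Y - A.mulVec Q))]

lemma lower_bound {N κ : Type*} [Fintype N] [Fintype κ] [DecidableEq κ]
    (A : Matrix N κ ℝ) (hA : 0 < gramDet A) (lam : ℝ) (hl : 0 < lam) (W us Y : N → ℝ)
    (Qs : κ → ℝ) (hu : us = A.mulVec Qs) (hY : Y = us + W) :
    Real.exp (-(1/2) * enr W ^ 2 - lam * enr us) * (Real.exp (- lam ^ 2 / 2) *
      lam ^ Fintype.card κ) ≤
    Real.sqrt (gramDet A) * (lam / Real.sqrt π) ^ Fintype.card κ * ∫ Q, dens A lam Y Q := by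
  have hint := integrable_dens A hA lam hl Y
  set g : (κ → ℝ) → ℝ := fun q => dens A lam Y (q + Qs) with hg
  have hgi : Integrable g := hint.comp_add_right Qs
  have e1 : ∫ Q, dens A lam Y Q = ∫ q, g q := (integral_add_right_eq_self _ Qs).symm
  have e2 : ∫ q, g (-q) = ∫ q, g q := integral_neg_eq_self g volume
  set c := Real.exp (-(1/2) * enr W ^ 2 - lam * enr us) * Real.exp (- lam ^ 2 / 2) with hc
  obtain ⟨G1, G2⟩ := gauss A hA (b := 1) one_pos
  have hpt : ∀ q, c * Real.exp (ipr W (A.mulVec q)) * Real.exp (-1 * enr (A.mulVec q) ^ 2)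
      ≤ g q := by
    intro q
    have h2 : (enr fun t => Y t - A.mulVec (q + Qs) t) ^ 2 = enr (W - A.mulVec q) ^ 2 := by
      congr 2; funext t; simp [hY, hu, Matrix.mulVec_add]; ring
    have h3 : enr (A.mulVec (q + Qs)) ≤ enr (A.mulVec q) + enr us := by
      rw [Matrix.mulVec_add, hu]; exact enr_add_le _ _
    simp only [hg, dens, h2, hc, ← Real.exp_add]
    apply Real.exp_le_exp.mpr
    rw [enr_sq_sub]
    nlinarith [sq_nonneg (enr (A.mulVec q) - lam), mul_le_mul_of_nonneg_left h3 hl.le]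
  have hsum : ∀ q, 2 * c * Real.exp (-1 * enr (A.mulVec q) ^ 2) ≤ g q + g (-q) := by
    intro q
    have a1 := hpt q
    have a2 := hpt (-q)
    have i1 : ipr W (A.mulVec (-q)) = - ipr W (A.mulVec q) := by
      simp [ipr, Matrix.mulVec_neg]
    rw [i1, Matrix.mulVec_neg, enr_neg] at a2
    have b1 := Real.add_one_le_exp (ipr W (A.mulVec q))
    have b2 := Real.add_one_le_exp (-ipr W (A.mulVec q))
    have hc0 : 0 < c * Real.exp (-1 * enr (A.mulVec q) ^ 2) := by positivity
    nlinarith [mul_le_mul_of_nonneg_left (add_le_add b1 b2) hc0.le]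
  have hmono := integral_mono (G1.const_mul (2 * c)) (hgi.add hgi.comp_neg) hsum
  simp only [Pi.add_apply] at hmono
  rw [integral_const_mul, integral_add hgi hgi.comp_neg, e2] at hmono
  have hI : c * ∫ Q, Real.exp (-1 * enr (A.mulVec Q) ^ 2) ≤ ∫ Q, dens A lam Y Q := by
    rw [e1]; linarith
  have hpi : 0 < Real.sqrt π := Real.sqrt_pos.mpr Real.pi_pos
  calc _ = c * lam ^ Fintype.card κ := by rw [hc]; ring
    _ = (lam / Real.sqrt π) ^ Fintype.card κ * (c * (Real.sqrt (π / 1) ^ Fintype.card κ)) := by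
        rw [div_one, div_pow]; field_simp
    _ = Real.sqrt (gramDet A) * (lam / Real.sqrt π) ^ Fintype.card κ *
          (c * ∫ Q, Real.exp (-1 * enr (A.mulVec Q) ^ 2)) := by rw [← G2]; ring
    _ ≤ _ := mul_le_mul_of_nonneg_left hI (by positivity)

lemma exists_proj {N κ : Type*} [Fintype N] [Fintype κ] [DecidableEq κ]
    (A : Matrix N κ ℝ) (hA : 0 < gramDet A) (us : N → ℝ) :
    ∃ Q0 : κ → ℝ, ∀ Q, enr (A.mulVec (Q - Q0)) ^ 2 ≤ enr (A.mulVec Q - us) ^ 2 := by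
  have hdet : IsUnit (Aᵀ * A).det := (ne_of_gt hA).isUnit
  refine ⟨(Aᵀ * A)⁻¹.mulVec (Aᵀ.mulVec us), fun Q => ?_⟩
  set Q0 := (Aᵀ * A)⁻¹.mulVec (Aᵀ.mulVec us) with hQ0
  have h0 : Aᵀ.mulVec (us - A.mulVec Q0) = 0 := by
    rw [Matrix.mulVec_sub, hQ0, Matrix.mulVec_mulVec, Matrix.mulVec_mulVec,
      Matrix.mul_nonsing_inv _ hdet]
    simp
  have h1 : ipr (A.mulVec (Q - Q0)) (us - A.mulVec Q0) = 0 := by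
    have : ipr (A.mulVec (Q - Q0)) (us - A.mulVec Q0) =
      (A.mulVec (Q - Q0)) ⬝ᵥ (us - A.mulVec Q0) := rfl
    rw [this, dotProduct_comm, Matrix.dotProduct_mulVec, ← Matrix.mulVec_transpose, h0]
    simp
  have h2 : A.mulVec Q - us = A.mulVec (Q - Q0) - (us - A.mulVec Q0) := by
    rw [Matrix.mulVec_sub]; abel
  rw [h2, enr_sq_sub, h1]
  nlinarith [sq_nonneg (enr (us - A.mulVec Q0))]

lemma upper_bound {N κ : Type*} [Fintype N] [Fintype κ] [DecidableEq κ]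
    (A : Matrix N κ ℝ) (lam : ℝ) (hl : 0 < lam) (W us Y : N → ℝ) (hY : Y = us + W)
    (t R : ℝ) (ht : ∀ Q, ipr W (A.mulVec Q - us) ≤ t * enr (A.mulVec Q - us))
    (S : Set (κ → ℝ)) (hS : MeasurableSet S) (hR : ∀ Q ∈ S, R ≤ enr (A.mulVec Q - us) ^ 2) :
    Real.sqrt (gramDet A) * (lam / Real.sqrt π) ^ Fintype.card κ * ∫ Q in S, dens A lam Y Q ≤
    Real.exp (-(1/2) * enr W ^ 2 - lam * enr us) * (Real.exp ((t + lam) ^ 2 - R / 8) *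
      (3 * lam) ^ Fintype.card κ) := by
  rcases (gramDet_nonneg A).eq_or_lt with h0 | hA
  · rw [← h0, Real.sqrt_zero, zero_mul, zero_mul]; positivity
  obtain ⟨Q0, hQ0⟩ := exists_proj A hA us
  obtain ⟨G1, G2⟩ := gauss A hA (b := 1/8) (by norm_num)
  set c := Real.exp (-(1/2) * enr W ^ 2 - lam * enr us) * Real.exp ((t + lam) ^ 2 - R / 8) with hc
  have hpt : ∀ Q ∈ S, dens A lam Y Q ≤ c * Real.exp (-(1/8) * enr (A.mulVec (Q - Q0)) ^ 2) := by
    intro Q hQ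
    have h2 : (enr fun t => Y t - A.mulVec Q t) ^ 2 = enr (W - (A.mulVec Q - us)) ^ 2 := by
      congr 2; funext t; simp [hY]; ring
    have h3 : enr us ≤ enr (A.mulVec Q) + enr (A.mulVec Q - us) := by
      calc enr us = enr (A.mulVec Q + -(A.mulVec Q - us)) := by congr 1; abel
        _ ≤ _ := by rw [← enr_neg (A.mulVec Q - us)]; exact enr_add_le _ _
    simp only [dens, h2, hc, ← Real.exp_add]
    apply Real.exp_le_exp.mpr
    rw [enr_sq_sub]
    nlinarith [sq_nonneg (enr (A.mulVec Q - us) / 2 - (t + lam)), mul_le_mul_of_nonneg_left h3 hl.le,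
      ht Q, hR Q hQ, hQ0 Q]
  have G1' : Integrable (fun Q => c * Real.exp (-(1/8) * enr (A.mulVec (Q - Q0)) ^ 2)) :=
    (G1.comp_sub_right Q0).const_mul c
  have hI : ∫ Q in S, dens A lam Y Q ≤ c * ∫ Q, Real.exp (-(1/8) * enr (A.mulVec Q) ^ 2) := by
    calc _ ≤ ∫ Q in S, c * Real.exp (-(1/8) * enr (A.mulVec (Q - Q0)) ^ 2) :=
          setIntegral_mono_on (integrable_dens A hA lam hl Y).integrableOn G1'.integrableOn hS hpt
      _ ≤ ∫ Q, c * Real.exp (-(1/8) * enr (A.mulVec (Q - Q0)) ^ 2) :=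
          setIntegral_le_integral G1' (Filter.Eventually.of_forall fun Q => by positivity)
      _ = _ := by
          rw [integral_const_mul]
          congr 1
          exact integral_sub_right_eq_self (fun Q => Real.exp (-(1/8) * enr (A.mulVec Q) ^ 2)) Q0
  have hpi : 0 < Real.sqrt π := Real.sqrt_pos.mpr Real.pi_pos
  calc _ ≤ Real.sqrt (gramDet A) * (lam / Real.sqrt π) ^ Fintype.card κ *
          (c * ∫ Q, Real.exp (-(1/8) * enr (A.mulVec Q) ^ 2)) :=
        mul_le_mul_of_nonneg_left hI (by positivity)
    _ = c * (lam / Real.sqrt π * Real.sqrt (π / (1 / 8))) ^ Fintype.card κ := by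
        rw [mul_pow, ← G2]; ring
    _ ≤ c * (3 * lam) ^ Fintype.card κ := by
        refine mul_le_mul_of_nonneg_left (pow_le_pow_left₀ (by positivity) ?_ _) (by positivity)
        have : Real.sqrt (π / (1/8)) ≤ 3 * Real.sqrt π := by
          apply Real.sqrt_le_iff.mpr
          refine ⟨by positivity, ?_⟩
          rw [mul_pow, Real.sq_sqrt Real.pi_pos.le]
          nlinarith [Real.pi_pos]
        calc _ ≤ lam / Real.sqrt π * (3 * Real.sqrt π) :=
              mul_le_mul_of_nonneg_left this (by positivity)
          _ = 3 * lam := by field_simp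
    _ = _ := by rw [hc]; ring

lemma exists_net (V : Type*) [NormedAddCommGroup V] [NormedSpace ℝ V] [FiniteDimensional ℝ V] :
    ∃ s : Finset V, s.card ≤ 5 ^ Module.finrank ℝ V ∧ (∀ c ∈ s, ‖c‖ ≤ 2) ∧
      ∀ x : V, ‖x‖ ≤ 2 → ∃ c ∈ s, ‖x - c‖ < 1 := by
  let p : ℕ → Prop := fun k => ∃ s : Finset V, s.card = k ∧ (∀ c ∈ s, ‖c‖ ≤ 2) ∧
    (∀ c ∈ s, ∀ d ∈ s, c ≠ d → 1 ≤ ‖c - d‖)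
  have hb : ∀ k, p k → k ≤ 5 ^ Module.finrank ℝ V := by
    rintro k ⟨s, rfl, h1, h2⟩
    exact Besicovitch.card_le_of_separated s h1 h2
  have h0 : p 0 := ⟨∅, by simp⟩
  obtain ⟨s, hs, h1, h2⟩ : p (Nat.findGreatest p (5 ^ Module.finrank ℝ V)) :=
    Nat.findGreatest_spec (Nat.zero_le _) h0
  refine ⟨s, Besicovitch.card_le_of_separated s h1 h2, h1, fun x hx => ?_⟩
  by_contra! hcon
  have hxs : x ∉ s := fun h => by
    have := hcon x h
    simp at this
    linarith
  have hp : p (s.card + 1) := by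
    refine ⟨insert x s, Finset.card_insert_of_notMem hxs, ?_, ?_⟩
    · intro c hc
      rcases Finset.mem_insert.mp hc with rfl | h
      · exact hx
      · exact h1 c h
    · intro c hc d hd hcd
      rcases Finset.mem_insert.mp hc with rfl | h <;> rcases Finset.mem_insert.mp hd with rfl | h'
      · exact absurd rfl hcd
      · exact hcon d h'
      · rw [norm_sub_rev]; exact hcon c h
      · exact h2 c h d h' hcd
  have := Nat.le_findGreatest (hb _ hp) hp
  omega

lemma subspace_bound {N Ω : Type*} [Fintype N] [MeasurableSpace Ω] (P : Measure Ω) (ρ : ℝ)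
    (W : Ω → N → ℝ) (hW : subG P ρ W) (V : Submodule ℝ (EuclideanSpace ℝ N)) (t : ℝ) (ht : 0 < t) :
    P {ω | ∃ v : N → ℝ, WithLp.toLp 2 v ∈ V ∧ t * enr v < ipr (W ω) v} ≤
      5 ^ Module.finrank ℝ V * ENNReal.ofReal (Real.exp (-ρ * (t / 2) ^ 2 / 2)) := by
  obtain ⟨s, hs, h1, h2⟩ := exists_net V
  let s' := s.filter (fun c => c ≠ 0)
  have hsub : {ω | ∃ v : N → ℝ, WithLp.toLp 2 v ∈ V ∧ t * enr v < ipr (W ω) v} ⊆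
      ⋃ c ∈ s', {ω | t / 2 < |ipr (W ω) (WithLp.ofLp (‖c‖⁻¹ • (c : EuclideanSpace ℝ N)))|} := by
    rintro ω ⟨v, hv, hlt⟩
    set Wω : EuclideanSpace ℝ N := WithLp.toLp 2 (W ω) with hWω
    set w := V.orthogonalProjectionOnto Wω with hw
    have hin : ∀ x : V, inner ℝ Wω (x : EuclideanSpace ℝ N) = inner ℝ w x := fun x =>
      (Submodule.inner_orthogonalProjectionOnto_eq_of_mem_right x Wω).symm
    have hvle : t * ‖(⟨_, hv⟩ : V)‖ < ‖w‖ * ‖(⟨_, hv⟩ : V)‖ := by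
      rw [enr_eq_norm, ipr_eq_inner] at hlt
      have e := hin ⟨_, hv⟩
      calc _ < _ := hlt
        _ = _ := e
        _ ≤ _ := real_inner_le_norm _ _
    have htw : t < ‖w‖ := lt_of_mul_lt_mul_right hvle (norm_nonneg _)
    have hw0 : 0 < ‖w‖ := ht.trans htw
    obtain ⟨c, hc, hxc⟩ := h2 ((2 / ‖w‖) • w) (by
      rw [norm_smul, Real.norm_of_nonneg (by positivity)]; field_simp; rfl)
    have hwc : t < inner ℝ w c := by
      have e1 : inner ℝ w ((2 / ‖w‖) • w) = 2 * ‖w‖ := by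
        rw [inner_smul_right, real_inner_self_eq_norm_sq]; field_simp
      have e2 : inner ℝ w ((2 / ‖w‖) • w - c) ≤ ‖w‖ := by
        calc _ ≤ ‖w‖ * ‖(2 / ‖w‖) • w - c‖ := real_inner_le_norm _ _
          _ ≤ ‖w‖ * 1 := by gcongr
          _ = _ := mul_one _
      rw [inner_sub_right, e1] at e2
      linarith
    have hc0 : c ≠ 0 := by
      rintro rfl; simp at hwc; linarith
    simp only [Set.mem_iUnion]
    refine ⟨c, Finset.mem_filter.mpr ⟨hc, hc0⟩, ?_⟩
    show t / 2 < _
    refine lt_of_lt_of_le ?_ (le_abs_self _)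
    rw [ipr_eq_inner]
    have : inner ℝ Wω (‖c‖⁻¹ • (c : EuclideanSpace ℝ N)) = ‖c‖⁻¹ * inner ℝ w c := by
      rw [inner_smul_right, hin]
    show t / 2 < inner ℝ Wω (‖c‖⁻¹ • (c : EuclideanSpace ℝ N))
    rw [this]
    have hcn : 0 < ‖c‖ := norm_pos_iff.mpr hc0
    rw [inv_mul_eq_div, lt_div_iff₀ hcn]
    nlinarith [h1 c hc]
  calc _ ≤ _ := measure_mono hsub
    _ ≤ ∑ c ∈ s', P {ω | t / 2 < |ipr (W ω) (WithLp.ofLp (‖c‖⁻¹ • (c : EuclideanSpace ℝ N)))|} :=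
        measure_biUnion_finset_le _ _
    _ ≤ ∑ c ∈ s', ENNReal.ofReal (Real.exp (-ρ * (t / 2) ^ 2 / 2)) := by
        refine Finset.sum_le_sum fun c hc => hW _ ?_ _ (by positivity)
        rw [enr_eq_norm]
        show ‖‖c‖⁻¹ • (c : EuclideanSpace ℝ N)‖ = 1
        have hcn : ‖(c : EuclideanSpace ℝ N)‖ ≠ 0 := by
          have := (Finset.mem_filter.mp hc).2
          simpa using this
        rw [norm_smul, norm_inv, norm_norm]
        exact inv_mul_cancel₀ hcn
    _ = s'.card * ENNReal.ofReal (Real.exp (-ρ * (t / 2) ^ 2 / 2)) := by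
        rw [Finset.sum_const, nsmul_eq_mul]
    _ ≤ _ := by
        gcongr
        have : s'.card ≤ 5 ^ Module.finrank ℝ V := (Finset.card_filter_le _ _).trans hs
        exact_mod_cast this

lemma model_bound {N κ Ω : Type*} [Fintype N] [Fintype κ] [MeasurableSpace Ω]
    (P : Measure Ω) (ρ : ℝ) (W : Ω → N → ℝ) (hW : subG P ρ W) (A : Matrix N κ ℝ) (us : N → ℝ)
    (t : ℝ) (ht : 0 < t) :
    P {ω | ∃ Q : κ → ℝ, t * enr (A.mulVec Q - us) < ipr (W ω) (A.mulVec Q - us)} ≤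
      5 ^ (Fintype.card κ + 1) * ENNReal.ofReal (Real.exp (-ρ * (t / 2) ^ 2 / 2)) := by
  let T : (κ → ℝ) →ₗ[ℝ] EuclideanSpace ℝ N :=
    (WithLp.linearEquiv 2 ℝ (N → ℝ)).symm.toLinearMap ∘ₗ A.mulVecLin
  let V : Submodule ℝ (EuclideanSpace ℝ N) := LinearMap.range T ⊔ Submodule.span ℝ {WithLp.toLp 2 us}
  have hV : Module.finrank ℝ V ≤ Fintype.card κ + 1 := by
    refine (Submodule.finrank_add_le_finrank_add_finrank _ _).trans ?_
    gcongr
    · exact (LinearMap.finrank_range_le T).trans (by simp)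
    · exact (finrank_span_le_card _).trans (by simp)
  refine (measure_mono ?_).trans ((subspace_bound P ρ W hW V t ht).trans ?_)
  · rintro ω ⟨Q, hQ⟩
    refine ⟨_, ?_, hQ⟩
    rw [WithLp.toLp_sub]
    refine Submodule.sub_mem _ (Submodule.mem_sup_left ⟨Q, rfl⟩)
      (Submodule.mem_sup_right (Submodule.mem_span_singleton_self _))
  · gcongr
    norm_num

noncomputable def rate (p m k : ℕ) : ℝ := (p : ℝ) * (k : ℝ) + (m : ℝ) * Real.log k

lemma rate_mono {p m k l : ℕ} (hk : 1 ≤ k) (h : k ≤ l) : rate p m k ≤ rate p m l := by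
  have h1 : (k : ℝ) ≤ l := by exact_mod_cast h
  have h2 : (0 : ℝ) < k := by exact_mod_cast hk
  unfold rate
  have := Real.log_le_log h2 h1
  gcongr

lemma le_rate {p m k : ℕ} : ((p * k : ℕ) : ℝ) ≤ rate p m k := by
  have := mul_nonneg (Nat.cast_nonneg (α := ℝ) m) (Real.log_natCast_nonneg k)
  unfold rate; push_cast; linarith

lemma log_le_rate {p m k : ℕ} : (m : ℝ) * Real.log k ≤ rate p m k := by
  unfold rate
  have : (0 : ℝ) ≤ p * k := by positivity
  linarith

lemma one_le_rate {p m k : ℕ} (hp : 1 ≤ p) (hk : 1 ≤ k) : 1 ≤ rate p m k := by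
  refine le_trans ?_ le_rate
  exact_mod_cast Nat.mul_pos hp hk

lemma sum_exp_rate (p m : ℕ) : ∑ k : Fin p, Real.exp (-rate p m ((k : ℕ) + 1)) ≤ 1 := by
  rcases Nat.eq_zero_or_pos p with rfl | hp
  · simp
  have h1 : ∀ k : ℕ, Real.exp (-rate p m (k + 1)) ≤ (1 / 2 : ℝ) ^ (k + 1) := by
    intro k
    have : ((k + 1 : ℕ) : ℝ) ≤ rate p m (k + 1) := by
      refine le_trans ?_ le_rate
      exact_mod_cast Nat.le_mul_of_pos_left _ hp
    calc Real.exp (-rate p m (k + 1)) ≤ Real.exp (((k + 1 : ℕ) : ℝ) * (-1)) :=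
          Real.exp_le_exp.mpr (by linarith)
      _ = Real.exp (-1) ^ (k + 1) := Real.exp_nat_mul _ _
      _ ≤ _ := by
          refine pow_le_pow_left₀ (Real.exp_pos _).le ?_ _
          rw [Real.exp_neg, one_div]
          apply inv_anti₀ (by norm_num)
          have := Real.add_one_le_exp (1 : ℝ)
          linarith
  rw [Fin.sum_univ_eq_sum_range (fun k => Real.exp (-rate p m (k + 1)))]
  refine (Finset.sum_le_sum fun k _ => h1 k).trans ?_
  have h2 : ∀ q : ℕ, ∑ k ∈ Finset.range q, (1 / 2 : ℝ) ^ (k + 1) = 1 - (1 / 2) ^ q := by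
    intro q
    induction q with
    | zero => simp
    | succ q ih => rw [Finset.sum_range_succ, ih]; ring
  rw [h2]
  have : (0 : ℝ) < (1 / 2) ^ p := by positivity
  linarith

lemma true_model {n p m ks : ℕ} (hm : 1 ≤ m) (hks : ks ≤ p) (X : Matrix (Fin n) (Fin p) ℝ)
    (hX : 0 < (Xᵀ * X).det) (Qs : Fin p → Fin ks → ℝ) (zs : Fin m → Fin ks)
    (Bs : Fin p → Fin m → ℝ) (hB : ∀ t j, Bs t j = Qs t (zs j)) :
    ∃ (k : Fin p) (z : Fin m → Fin ((k : ℕ) + 1)) (Q : Fin p × Fin ((k : ℕ) + 1) → ℝ),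
      (k : ℕ) + 1 ≤ ks ∧ 0 < gramDet (mtX m ((k : ℕ) + 1) X z) ∧
      (fun a : Fin n × Fin m => ∑ t, X a.1 t * Bs t a.2) =
        (mtX m ((k : ℕ) + 1) X z).mulVec Q := by
  let I := Finset.univ.image zs
  have hI1 : 0 < I.card := Finset.card_pos.mpr ⟨zs ⟨0, hm⟩, Finset.mem_image_of_mem _ (Finset.mem_univ _)⟩
  have hI2 : I.card ≤ ks := by simpa using Finset.card_le_univ I
  obtain ⟨k, hk⟩ : ∃ k, I.card = k + 1 := ⟨I.card - 1, by omega⟩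
  let e : I ≃ Fin (k + 1) := I.equivFinOfCardEq hk
  let z : Fin m → Fin (k + 1) := fun j => e ⟨zs j, Finset.mem_image_of_mem _ (Finset.mem_univ _)⟩
  have hz : Function.Surjective z := by
    intro c
    obtain ⟨j, -, hj⟩ := Finset.mem_image.mp (e.symm c).2
    refine ⟨j, ?_⟩
    have : (⟨zs j, Finset.mem_image_of_mem _ (Finset.mem_univ _)⟩ : I) = e.symm c := Subtype.ext hj
    simp only [z, this, Equiv.apply_symm_apply]
  have hmv : ∀ (Q : Fin p × Fin (k + 1) → ℝ) (a : Fin n × Fin m),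
      (mtX m (k + 1) X z).mulVec Q a = ∑ t, X a.1 t * Q (t, z a.2) := by
    intro Q a
    simp only [Matrix.mulVec, dotProduct, mtX, Fintype.sum_prod_type, ite_mul, zero_mul]
    simp
  refine ⟨⟨k, by omega⟩, z, fun b => Qs b.1 (e.symm b.2), by show k + 1 ≤ ks; omega, ?_, ?_⟩
  · have hinj : Function.Injective (mtX m (k + 1) X z).mulVec := by
      intro Q Q' h
      funext ⟨t, c⟩
      obtain ⟨j, rfl⟩ := hz c
      have hu : IsUnit (Xᵀ * X).det := (ne_of_gt hX).isUnit
      have h1 : X.mulVec (fun t => Q (t, z j)) = X.mulVec (fun t => Q' (t, z j)) := by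
        funext i
        have := congrFun h (i, j)
        rw [hmv, hmv] at this
        exact this
      have h2 := congrArg (fun v => (Xᵀ * X)⁻¹.mulVec (Xᵀ.mulVec v)) h1
      simp only [Matrix.mulVec_mulVec] at h2
      rw [Matrix.nonsing_inv_mul _ hu] at h2
      simp only [Matrix.one_mulVec] at h2
      exact congrFun h2 t
    have := (Matrix.PosDef.conjTranspose_mul_self _ hinj).det_pos
    simpa [gramDet, Matrix.conjTranspose_eq_transpose_of_trivial] using this
  · funext a
    show _ = (mtX m (k + 1) X z).mulVec _ a
    rw [hmv]
    refine Finset.sum_congr rfl fun t _ => ?_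
    rw [hB]
    simp [z]

noncomputable def tk (p m ks : ℕ) (ρ : ℝ) (k : ℕ) : ℝ :=
  Real.sqrt (40 / ρ * (rate p m k + rate p m ks))

def badE {Ω : Type*} (n p m ks : ℕ) (X : Matrix (Fin n) (Fin p) ℝ) (ρ : ℝ)
    (us : Fin n × Fin m → ℝ) (W : Ω → Fin n × Fin m → ℝ) : Set Ω :=
  {ω | ∃ i : Σ k : Fin p, (Fin m → Fin ((k : ℕ) + 1)), ∃ Q,
    tk p m ks ρ ((i.1 : ℕ) + 1) * enr ((mtX m ((i.1 : ℕ) + 1) X i.2).mulVec Q - us) <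
      ipr (W ω) ((mtX m ((i.1 : ℕ) + 1) X i.2).mulVec Q - us)}

lemma badE_bound {Ω : Type*} [MeasurableSpace Ω] (P : Measure Ω)
    {n p m ks : ℕ} (hp : 1 ≤ p) (hks : 1 ≤ ks) (X : Matrix (Fin n) (Fin p) ℝ)
    {ρ : ℝ} (hρ : 0 < ρ)
    (us : Fin n × Fin m → ℝ) (W : Ω → Fin n × Fin m → ℝ) (hW : subG P ρ W) :
    P (badE n p m ks X ρ us W) ≤ ENNReal.ofReal (Real.exp (-2 * rate p m ks)) := by
  have hs1 := one_le_rate (m := m) hp hks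
  have hsub : badE n p m ks X ρ us W = ⋃ i : Σ k : Fin p, (Fin m → Fin ((k : ℕ) + 1)),
      {ω | ∃ Q, tk p m ks ρ ((i.1 : ℕ) + 1) * enr ((mtX m ((i.1 : ℕ) + 1) X i.2).mulVec Q - us) <
      ipr (W ω) ((mtX m ((i.1 : ℕ) + 1) X i.2).mulVec Q - us)} := by
    ext ω; simp [badE]
  have hterm : ∀ i : Σ k : Fin p, (Fin m → Fin ((k : ℕ) + 1)),
      P {ω | ∃ Q, tk p m ks ρ ((i.1 : ℕ) + 1) * enr ((mtX m ((i.1 : ℕ) + 1) X i.2).mulVec Q - us) <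
      ipr (W ω) ((mtX m ((i.1 : ℕ) + 1) X i.2).mulVec Q - us)} ≤
      ENNReal.ofReal (((((i.1 : ℕ) + 1 : ℕ) : ℝ) ^ m)⁻¹ *
        (Real.exp (-rate p m ((i.1 : ℕ) + 1)) * Real.exp (-2 * rate p m ks))) := by
    intro i
    set k := (i.1 : ℕ) + 1 with hk
    have hk1 : 1 ≤ k := by omega
    have hr1 := one_le_rate (m := m) hp hk1
    have hkpos : (0 : ℝ) < k := by exact_mod_cast hk1
    have harg : 0 < 40 / ρ * (rate p m k + rate p m ks) := by positivity
    have ht : 0 < tk p m ks ρ k := Real.sqrt_pos.mpr harg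
    refine (model_bound P ρ W hW _ us _ ht).trans ?_
    have h5 : (5 : ℝ≥0∞) = ENNReal.ofReal 5 := by simp
    rw [h5, ← ENNReal.ofReal_pow (by norm_num), ← ENNReal.ofReal_mul (by positivity)]
    apply ENNReal.ofReal_le_ofReal
    have ht2 : tk p m ks ρ k ^ 2 = 40 / ρ * (rate p m k + rate p m ks) := Real.sq_sqrt harg.le
    have e1 : -ρ * (tk p m ks ρ k / 2) ^ 2 / 2 = -5 * (rate p m k + rate p m ks) := by
      rw [div_pow, ht2]; field_simp; ring
    have e2 : ((k : ℝ) ^ m)⁻¹ = Real.exp (-(m * Real.log k)) := by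
      rw [Real.exp_neg, Real.exp_nat_mul, Real.exp_log hkpos]
    have e3 : (5 : ℝ) ≤ Real.exp 2 := by
      have h := Real.exp_one_gt_d9
      have : Real.exp 2 = Real.exp 1 * Real.exp 1 := by rw [← Real.exp_add]; norm_num
      rw [this]; nlinarith
    have e4 : Fintype.card (Fin p × Fin k) = p * k := by simp
    have e5 : (5 : ℝ) ^ (p * k + 1) ≤ Real.exp (((p * k + 1 : ℕ) : ℝ) * 2) := by
      rw [Real.exp_nat_mul]; exact pow_le_pow_left₀ (by norm_num) e3 _
    rw [e1, e2, e4]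
    calc _ ≤ Real.exp (((p * k + 1 : ℕ) : ℝ) * 2) * Real.exp (-5 * (rate p m k + rate p m ks)) := by
          gcongr
      _ ≤ _ := by
          rw [← Real.exp_add, ← Real.exp_add, ← Real.exp_add]
          apply Real.exp_le_exp.mpr
          have h1 : ((p * k : ℕ) : ℝ) + m * Real.log k = rate p m k := by
            unfold rate; push_cast; ring
          have h2 : (1 : ℝ) ≤ ((p * k : ℕ) : ℝ) := by
            exact_mod_cast Nat.mul_pos hp hk1
          have h3 : 0 ≤ (m : ℝ) * Real.log k :=
            mul_nonneg (Nat.cast_nonneg (α := ℝ) m) (Real.log_natCast_nonneg k)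
          push_cast at h1 h2 ⊢
          nlinarith
  rw [hsub]
  refine (measure_iUnion_fintype_le _ _).trans ((Finset.sum_le_sum fun i _ => hterm i).trans ?_)
  rw [← ENNReal.ofReal_sum_of_nonneg (fun i _ => by positivity)]
  apply ENNReal.ofReal_le_ofReal
  rw [Fintype.sum_sigma]
  have hz : ∀ k : Fin p, ∑ z : Fin m → Fin ((k : ℕ) + 1), (((((k : ℕ) + 1 : ℕ) : ℝ) ^ m)⁻¹ *
        (Real.exp (-rate p m ((k : ℕ) + 1)) * Real.exp (-2 * rate p m ks))) =
        Real.exp (-rate p m ((k : ℕ) + 1)) * Real.exp (-2 * rate p m ks) := by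
    intro k
    rw [Finset.sum_const, nsmul_eq_mul, Finset.card_univ, Fintype.card_fun, Fintype.card_fin,
      Fintype.card_fin, Nat.cast_pow, ← mul_assoc, mul_inv_cancel₀ (by positivity), one_mul]
  rw [Finset.sum_congr rfl fun k _ => hz k, ← Finset.sum_mul]
  have := sum_exp_rate p m
  nlinarith [Real.exp_pos (-2 * rate p m ks)]

noncomputable def wgt (p m : ℕ) (D : ℝ) (k : ℕ) : ℝ :=
  Real.exp (-D * rate p m k) * ((k : ℝ) ^ m)⁻¹

lemma wgt_nonneg (p m : ℕ) (D : ℝ) (k : ℕ) : 0 ≤ wgt p m D k := by unfold wgt; positivity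

noncomputable def zint {N κ : Type*} [Fintype N] [Fintype κ] [DecidableEq κ]
    (A : Matrix N κ ℝ) (lam : ℝ) (Y : N → ℝ) (S : Set (κ → ℝ)) : ℝ :=
  Real.sqrt (gramDet A) * (lam / Real.sqrt π) ^ Fintype.card κ * ∫ Q in S, dens A lam Y Q

lemma mtPost_eq (n p m : ℕ) (X : Matrix (Fin n) (Fin p) ℝ) (D lam : ℝ)
    (Y : Fin n × Fin m → ℝ) (K : Set ℕ) (U : Set (Fin n × Fin m → ℝ)) :
    mtPost n p m X D lam Y K U =
    (∑ i : Σ k : Fin p, (Fin m → Fin ((k : ℕ) + 1)),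
      (if ((i.1 : ℕ) + 1) ∈ K then wgt p m D ((i.1 : ℕ) + 1) else 0) *
        zint (mtX m ((i.1 : ℕ) + 1) X i.2) lam Y
          {Q | (mtX m ((i.1 : ℕ) + 1) X i.2).mulVec Q ∈ U}) /
    (∑ i : Σ k : Fin p, (Fin m → Fin ((k : ℕ) + 1)), wgt p m D ((i.1 : ℕ) + 1) *
        zint (mtX m ((i.1 : ℕ) + 1) X i.2) lam Y Set.univ) := by
  unfold mtPost gpostP zint
  simp only [setIntegral_univ, mul_assoc, wgt, rate, dens]
  rfl

lemma zint_nonneg {N κ : Type*} [Fintype N] [Fintype κ] [DecidableEq κ]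
    (A : Matrix N κ ℝ) {lam : ℝ} (hl : 0 < lam) (Y : N → ℝ) (S : Set (κ → ℝ)) :
    0 ≤ zint A lam Y S := by
  have : 0 ≤ ∫ Q in S, dens A lam Y Q := integral_nonneg fun Q => (dens_pos _ _ _ _).le
  unfold zint; positivity

lemma zint_mono {N κ : Type*} [Fintype N] [Fintype κ] [DecidableEq κ]
    (A : Matrix N κ ℝ) {lam : ℝ} (hl : 0 < lam) (Y : N → ℝ) (S : Set (κ → ℝ)) :
    zint A lam Y S ≤ zint A lam Y Set.univ := by
  unfold zint
  rcases (gramDet_nonneg A).eq_or_lt with h0 | hA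
  · simp [← h0]
  · rw [setIntegral_univ]
    refine mul_le_mul_of_nonneg_left ?_ (by positivity)
    exact setIntegral_le_integral (integrable_dens A hA lam hl Y)
      (Filter.Eventually.of_forall fun Q => (dens_pos _ _ _ _).le)

lemma mtPost_le_one (n p m : ℕ) (X : Matrix (Fin n) (Fin p) ℝ) (D : ℝ) {lam : ℝ} (hl : 0 < lam)
    (Y : Fin n × Fin m → ℝ) (K : Set ℕ) (U : Set (Fin n × Fin m → ℝ)) :
    mtPost n p m X D lam Y K U ≤ 1 := by
  rw [mtPost_eq]
  refine div_le_one_of_le₀ ?_ (Finset.sum_nonneg fun i _ =>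
    mul_nonneg (wgt_nonneg _ _ _ _) (zint_nonneg _ hl _ _))
  refine Finset.sum_le_sum fun i _ => ?_
  refine mul_le_mul ?_ (zint_mono _ hl _ _) (zint_nonneg _ hl _ _) (wgt_nonneg _ _ _ _)
  split_ifs
  · exact le_rfl
  · exact wgt_nonneg _ _ _ _

lemma post_bound {n p m ks : ℕ} (hks1 : 1 ≤ ks) (hks : ks ≤ p) (X : Matrix (Fin n) (Fin p) ℝ)
    (hX : 0 < (Xᵀ * X).det) (Qs : Fin p → Fin ks → ℝ) (zs : Fin m → Fin ks)
    (Bs : Fin p → Fin m → ℝ) (hB : ∀ t j, Bs t j = Qs t (zs j))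
    {lam ρ D : ℝ} (hl : 0 < lam) (hρ : 0 < ρ) (hD : 0 < D) (W us Y : Fin n × Fin m → ℝ)
    (hus : us = fun a : Fin n × Fin m => ∑ t, X a.1 t * Bs t a.2) (hY : Y = us + W)
    (hW : ∀ (i : Σ k : Fin p, (Fin m → Fin ((k : ℕ) + 1))) (Q : _),
      ipr W ((mtX m ((i.1 : ℕ) + 1) X i.2).mulVec Q - us) ≤
      tk p m ks ρ ((i.1 : ℕ) + 1) * enr ((mtX m ((i.1 : ℕ) + 1) X i.2).mulVec Q - us))
    (K : Set ℕ) (U : Set (Fin n × Fin m → ℝ)) (hU : MeasurableSet U)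
    (R : ℕ → ℝ) (hR : ∀ k ∈ K, ∀ v ∈ U, R k ≤ enr (v - us) ^ 2)
    (hexp : ∀ k ∈ K, 1 ≤ k →
      -(D - (2 * (40 / ρ) + 2 * lam ^ 2 + |Real.log (3 * lam)| + 1)) * rate p m k
      + (D + (1 + lam ^ 2 / 2 + |Real.log lam| + 2 * (40 / ρ))) * rate p m ks - R k / 8
        ≤ -2 * rate p m ks) :
    mtPost n p m X D lam Y K U ≤ Real.exp (-2 * rate p m ks) := by
  have hp : 1 ≤ p := hks1.trans hks
  have hs1 := one_le_rate (m := m) hp hks1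
  have hpowexp : ∀ (x : ℝ) (d : ℕ), 0 < x → x ^ d = Real.exp (d * Real.log x) := by
    intro x d hx
    rw [Real.exp_nat_mul, Real.exp_log hx]
  rw [mtPost_eq]
  rcases Nat.eq_zero_or_pos m with rfl | hm
  · have hden : (∑ i : Σ k : Fin p, (Fin 0 → Fin ((k : ℕ) + 1)), wgt p 0 D ((i.1 : ℕ) + 1) *
        zint (mtX 0 ((i.1 : ℕ) + 1) X i.2) lam Y Set.univ) = 0 := by
      refine Finset.sum_eq_zero fun i _ => ?_
      have hne : Nonempty (Fin p × Fin ((i.1 : ℕ) + 1)) := ⟨(⟨0, hp⟩, 0)⟩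
      have : gramDet (mtX 0 ((i.1 : ℕ) + 1) X i.2) = 0 := by
        unfold gramDet
        have h0 : (mtX 0 ((i.1 : ℕ) + 1) X i.2)ᵀ * (mtX 0 ((i.1 : ℕ) + 1) X i.2) = 0 := by
          ext a b
          simp [Matrix.mul_apply]
        rw [h0, Matrix.det_zero]
      simp [zint, this]
    rw [hden, div_zero]
    positivity
  obtain ⟨k0, z0, Q0, hk0, hg0, hu0⟩ := true_model hm hks X hX Qs zs Bs hB
  set G := Real.exp (-(1/2) * enr W ^ 2 - lam * enr us) with hG
  have hG0 : 0 < G := Real.exp_pos _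
  set L := Real.exp (-(D + (1 + lam ^ 2 / 2 + |Real.log lam|)) * rate p m ks) with hL
  have hden : G * L ≤ ∑ i : Σ k : Fin p, (Fin m → Fin ((k : ℕ) + 1)), wgt p m D ((i.1 : ℕ) + 1) *
        zint (mtX m ((i.1 : ℕ) + 1) X i.2) lam Y Set.univ := by
    refine le_trans ?_ (Finset.single_le_sum (f := fun i : Σ k : Fin p, (Fin m → Fin ((k : ℕ) + 1)) =>
      wgt p m D ((i.1 : ℕ) + 1) * zint (mtX m ((i.1 : ℕ) + 1) X i.2) lam Y Set.univ)
      (fun i _ => mul_nonneg (wgt_nonneg _ _ _ _) (zint_nonneg _ hl _ _))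
      (Finset.mem_univ ⟨k0, z0⟩))
    have hlow := lower_bound _ hg0 lam hl W us Y Q0 (hus.trans hu0) hY
    have hz : zint (mtX m ((k0 : ℕ) + 1) X z0) lam Y Set.univ =
      Real.sqrt (gramDet (mtX m ((k0 : ℕ) + 1) X z0)) * (lam / Real.sqrt π) ^
        Fintype.card (Fin p × Fin ((k0 : ℕ) + 1)) *
        ∫ Q, dens (mtX m ((k0 : ℕ) + 1) X z0) lam Y Q := by
      rw [zint, setIntegral_univ]
    show G * L ≤ wgt p m D ((k0 : ℕ) + 1) * zint (mtX m ((k0 : ℕ) + 1) X z0) lam Y Set.univ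
    rw [hz]
    refine le_trans ?_ (mul_le_mul_of_nonneg_left hlow (wgt_nonneg _ _ _ _))
    rw [← hG, mul_left_comm]
    refine mul_le_mul_of_nonneg_left ?_ hG0.le
    set k := (k0 : ℕ) + 1 with hk
    have hkpos : (0 : ℝ) < k := by
      have : 0 < k := by omega
      exact_mod_cast this
    have hrk : rate p m k ≤ rate p m ks := rate_mono (by omega) hk0
    have hcard : Fintype.card (Fin p × Fin k) = p * k := by simp
    rw [hcard, wgt, hpowexp _ _ hkpos, hpowexp _ (p * k) hl, ← Real.exp_neg, ← Real.exp_add,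
      ← Real.exp_add, ← Real.exp_add, hL]
    apply Real.exp_le_exp.mpr
    have a1 : (m : ℝ) * Real.log k ≤ rate p m ks := log_le_rate.trans hrk
    have a2 : ((p * k : ℕ) : ℝ) ≤ rate p m ks := le_rate.trans hrk
    have a3 : -(|Real.log lam| * rate p m ks) ≤ ((p * k : ℕ) : ℝ) * Real.log lam := by
      have b1 := neg_abs_le (Real.log lam)
      have b2 : (0 : ℝ) ≤ ((p * k : ℕ) : ℝ) := Nat.cast_nonneg _
      nlinarith [mul_le_mul_of_nonneg_left a2 (abs_nonneg (Real.log lam)),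
        mul_le_mul_of_nonneg_left b1 b2]
    have a4 := mul_le_mul_of_nonneg_left hrk hD.le
    have a5 := mul_le_mul_of_nonneg_left hs1 (by positivity : 0 ≤ lam ^ 2 / 2)
    linarith
  have hnum : ∀ i : Σ k : Fin p, (Fin m → Fin ((k : ℕ) + 1)),
      (if ((i.1 : ℕ) + 1) ∈ K then wgt p m D ((i.1 : ℕ) + 1) else 0) *
        zint (mtX m ((i.1 : ℕ) + 1) X i.2) lam Y
          {Q | (mtX m ((i.1 : ℕ) + 1) X i.2).mulVec Q ∈ U} ≤
      ((((i.1 : ℕ) + 1 : ℕ) : ℝ) ^ m)⁻¹ * (Real.exp (-rate p m ((i.1 : ℕ) + 1)) *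
        (Real.exp (-2 * rate p m ks) * (G * L))) := by
    intro i
    have hi := hW i
    set k := (i.1 : ℕ) + 1 with hk
    set A := mtX m k X i.2 with hA
    have hk1 : 1 ≤ k := by omega
    have hr1 := one_le_rate (m := m) hp hk1
    split_ifs with hkK
    swap
    · rw [zero_mul]; positivity
    have hS : MeasurableSet {Q | A.mulVec Q ∈ U} := (continuous_mulVec' A).measurable hU
    have hup := upper_bound A lam hl W us Y hY (tk p m ks ρ k) (R k) hi {Q | A.mulVec Q ∈ U} hS
      (fun Q hQ => hR k hkK _ hQ)
    have hup' : zint A lam Y {Q | A.mulVec Q ∈ U} ≤ _ := hup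
    refine (mul_le_mul_of_nonneg_left hup' (wgt_nonneg _ _ _ _)).trans ?_
    rw [← hG, wgt]
    have hcard : Fintype.card (Fin p × Fin k) = p * k := by simp
    rw [hcard, hpowexp _ (p * k) (by positivity : 0 < 3 * lam)]
    have key : Real.exp (-D * rate p m k) * (Real.exp ((tk p m ks ρ k + lam) ^ 2 - R k / 8) *
        Real.exp (((p * k : ℕ) : ℝ) * Real.log (3 * lam))) ≤
        Real.exp (-rate p m k) * (Real.exp (-2 * rate p m ks) * L) := by
      rw [hL, ← Real.exp_add, ← Real.exp_add, ← Real.exp_add, ← Real.exp_add]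
      apply Real.exp_le_exp.mpr
      have harg : 0 ≤ 40 / ρ * (rate p m k + rate p m ks) := by positivity
      have ht2 : tk p m ks ρ k ^ 2 = 40 / ρ * (rate p m k + rate p m ks) := Real.sq_sqrt harg
      have b1 : (tk p m ks ρ k + lam) ^ 2 ≤ 2 * (40 / ρ * (rate p m k + rate p m ks)) +
          2 * lam ^ 2 * rate p m k := by
        have := mul_le_mul_of_nonneg_left hr1 (by positivity : 0 ≤ 2 * lam ^ 2)
        nlinarith [sq_nonneg (tk p m ks ρ k - lam)]
      have b2 : ((p * k : ℕ) : ℝ) * Real.log (3 * lam) ≤ |Real.log (3 * lam)| * rate p m k := by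
        have c1 := le_abs_self (Real.log (3 * lam))
        have c2 : (0 : ℝ) ≤ ((p * k : ℕ) : ℝ) := Nat.cast_nonneg _
        have c3 : ((p * k : ℕ) : ℝ) ≤ rate p m k := le_rate
        nlinarith [mul_le_mul_of_nonneg_left c3 (abs_nonneg (Real.log (3 * lam))),
          mul_le_mul_of_nonneg_left c1 c2]
      have b3 := hexp k hkK hk1
      linarith
    calc _ = G * ((k : ℝ) ^ m)⁻¹ * (Real.exp (-D * rate p m k) *
          (Real.exp ((tk p m ks ρ k + lam) ^ 2 - R k / 8) *
          Real.exp (((p * k : ℕ) : ℝ) * Real.log (3 * lam)))) := by ring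
      _ ≤ G * ((k : ℝ) ^ m)⁻¹ * (Real.exp (-rate p m k) * (Real.exp (-2 * rate p m ks) * L)) :=
          mul_le_mul_of_nonneg_left key (by positivity)
      _ = _ := by ring
  have hL0 : 0 < L := Real.exp_pos _
  rw [div_le_iff₀ (lt_of_lt_of_le (mul_pos hG0 hL0) hden)]
  refine le_trans ?_ (mul_le_mul_of_nonneg_left hden (Real.exp_pos _).le)
  refine (Finset.sum_le_sum fun i _ => hnum i).trans ?_
  rw [Fintype.sum_sigma]
  have hz : ∀ k : Fin p, ∑ z : Fin m → Fin ((k : ℕ) + 1), (((((k : ℕ) + 1 : ℕ) : ℝ) ^ m)⁻¹ *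
        (Real.exp (-rate p m ((k : ℕ) + 1)) * (Real.exp (-2 * rate p m ks) * (G * L)))) =
        Real.exp (-rate p m ((k : ℕ) + 1)) * (Real.exp (-2 * rate p m ks) * (G * L)) := by
    intro k
    rw [Finset.sum_const, nsmul_eq_mul, Finset.card_univ, Fintype.card_fun, Fintype.card_fin,
      Fintype.card_fin, Nat.cast_pow, ← mul_assoc, mul_inv_cancel₀ (by positivity), one_mul]
  rw [Finset.sum_congr rfl fun k _ => hz k, ← Finset.sum_mul]
  exact mul_le_of_le_one_left (by positivity) (sum_exp_rate p m)

lemma integral_bound {Ω : Type*} [MeasurableSpace Ω] (P : Measure Ω) [IsProbabilityMeasure P]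
    (f : Ω → ℝ) (h1 : ∀ ω, f ω ≤ 1) (E : Set Ω) (r : ℝ) (hr : 1 ≤ r)
    (hE : P E ≤ ENNReal.ofReal (Real.exp (-2 * r))) (hf : ∀ ω, ω ∉ E → f ω ≤ Real.exp (-2 * r)) :
    ∫ ω, f ω ∂P ≤ Real.exp (-1 * r) := by
  by_cases hi : Integrable f P
  swap
  · rw [integral_undef hi]; positivity
  have hm := measurableSet_toMeasurable P E
  have hind : Integrable ((toMeasurable P E).indicator (fun _ => (1 : ℝ))) P :=
    (integrable_const 1).indicator hm
  have hle : ∀ ω, f ω ≤ Real.exp (-2 * r) + (toMeasurable P E).indicator (fun _ => (1 : ℝ)) ω := by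
    intro ω
    by_cases h : ω ∈ toMeasurable P E
    · rw [Set.indicator_of_mem h]
      have := h1 ω
      have := Real.exp_pos (-2 * r)
      linarith
    · rw [Set.indicator_of_notMem h, add_zero]
      exact hf ω fun h' => h (subset_toMeasurable P E h')
  have hint := integral_mono hi ((integrable_const _).add hind) hle
  simp only [Pi.add_apply] at hint
  rw [integral_add (integrable_const _) hind, integral_const, integral_indicator_const _ hm] at hint
  simp only [probReal_univ, smul_eq_mul, one_mul, mul_one] at hint
  have h2 : P.real (toMeasurable P E) ≤ Real.exp (-2 * r) := by
    rw [Measure.real, measure_toMeasurable]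
    exact ENNReal.toReal_le_of_le_ofReal (Real.exp_pos _).le hE
  have h3 : Real.exp (-2 * r) = Real.exp (-1 * r) * Real.exp (-r) := by
    rw [← Real.exp_add]; congr 1; ring
  have h4 : Real.exp (-r) ≤ 1 / 2 := by
    rw [Real.exp_neg, one_div]
    apply inv_anti₀ (by norm_num)
    have := Real.add_one_le_exp r
    linarith
  nlinarith [Real.exp_pos (-1 * r)]

/-- Corollary 7 (multi-task learning): posterior contraction at the minimax rate
`pk* + m log k*`, both for the selected number of clusters and the prediction loss. -/
theorem multitask_contraction :
    ∀ lam ρ : ℝ, 0 < lam → 0 < ρ →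
    ∃ δ₀ : ℝ, 0 < δ₀ ∧ δ₀ ≤ 1 ∧ ∀ δ : ℝ, 0 < δ → δ < δ₀ →
    ∃ D₀ : ℝ, 0 < D₀ ∧ ∀ D : ℝ, D₀ < D →
    ∃ M C' C'' : ℝ, 0 < M ∧ 0 < C' ∧ 0 < C'' ∧
    ∀ (n p m ks : ℕ), 1 ≤ ks → ks ≤ p →
    ∀ (X : Matrix (Fin n) (Fin p) ℝ), 0 < (Xᵀ * X).det →
    ∀ (Qs : Fin p → Fin ks → ℝ) (zs : Fin m → Fin ks)
      (Bs : Fin p → Fin m → ℝ), (∀ t j, Bs t j = Qs t (zs j)) →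
    ∀ (Ω : Type) (_ : MeasurableSpace Ω) (P : Measure Ω) (_ : IsProbabilityMeasure P)
      (W : Ω → Fin n × Fin m → ℝ), subG P ρ W →
    (∫ ω, mtPost n p m X D lam
          (fun a => (∑ t, X a.1 t * Bs t a.2) + W ω a)
          {k : ℕ | (1 + δ) * ((p : ℝ) * (ks : ℝ) + (m : ℝ) * Real.log ks)
              < (p : ℝ) * (k : ℝ) + (m : ℝ) * Real.log k} Set.univ ∂P
        ≤ Real.exp (-C' * ((p : ℝ) * (ks : ℝ) + (m : ℝ) * Real.log ks))) ∧
    (∫ ω, mtPost n p m X D lam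
          (fun a => (∑ t, X a.1 t * Bs t a.2) + W ω a) Set.univ
          {v : Fin n × Fin m → ℝ |
            M * ((p : ℝ) * (ks : ℝ) + (m : ℝ) * Real.log ks)
              < ∑ a : Fin n × Fin m, (v a - ∑ t, X a.1 t * Bs t a.2) ^ 2} ∂P
        ≤ Real.exp (-C'' * ((p : ℝ) * (ks : ℝ) + (m : ℝ) * Real.log ks))) := by
  intro lam ρ hl hρ
  refine ⟨1, one_pos, le_rfl, fun δ hδ hδ1 => ?_⟩
  set c1 := 2 * (40 / ρ) + 2 * lam ^ 2 + |Real.log (3 * lam)| + 1 with hc1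
  set c2 := 1 + lam ^ 2 / 2 + |Real.log lam| + 2 * (40 / ρ) with hc2
  have hc1p : 0 < c1 := by positivity
  have hc2p : 0 < c2 := by positivity
  refine ⟨(2 * c1 + c2 + 2) / δ, by positivity, fun D hD => ?_⟩
  rw [div_lt_iff₀ hδ] at hD
  have hDc : c1 < D := by nlinarith
  have hDp : 0 < D := hc1p.trans hDc
  refine ⟨8 * (D + c2 + 2), 1, 1, by positivity, one_pos, one_pos, ?_⟩
  intro n p m ks hks1 hks X hX Qs zs Bs hB Ω _ P _ W hW
  have hp : 1 ≤ p := hks1.trans hks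
  have hs1 := one_le_rate (m := m) hp hks1
  set us : Fin n × Fin m → ℝ := fun a => ∑ t, X a.1 t * Bs t a.2 with hus
  have hE := badE_bound P hp hks1 X hρ us W hW
  have hgood : ∀ ω, ω ∉ badE n p m ks X ρ us W →
      ∀ (i : Σ k : Fin p, (Fin m → Fin ((k : ℕ) + 1))) (Q : _),
      ipr (W ω) ((mtX m ((i.1 : ℕ) + 1) X i.2).mulVec Q - us) ≤
      tk p m ks ρ ((i.1 : ℕ) + 1) * enr ((mtX m ((i.1 : ℕ) + 1) X i.2).mulVec Q - us) := by
    intro ω hω i Q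
    by_contra hcon
    exact hω ⟨i, Q, not_le.mp hcon⟩
  have hbig : ∀ k : ℕ, (1 + δ) * rate p m ks < rate p m k →
      -(D - c1) * rate p m k + (D + c2) * rate p m ks - 0 / 8 ≤ -2 * rate p m ks := by
    intro k hk
    have h1 := mul_le_mul_of_nonneg_left hk.le (sub_pos.mpr hDc).le
    have h2 : 0 ≤ (D * δ - (2 * c1 + c2 + 2)) * rate p m ks :=
      mul_nonneg (by linarith) (by linarith)
    have h3 : 0 ≤ c1 * (1 - δ) * rate p m ks :=
      mul_nonneg (mul_nonneg hc1p.le (by linarith)) (by linarith)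
    nlinarith
  constructor
  · refine integral_bound P _ (fun ω => mtPost_le_one _ _ _ _ _ hl _ _ _)
      (badE n p m ks X ρ us W) (rate p m ks) hs1 hE (fun ω hω => ?_)
    refine post_bound hks1 hks X hX Qs zs Bs hB hl hρ hDp (W ω) us _ rfl rfl (hgood ω hω) _ _
      MeasurableSet.univ (fun _ => 0) (fun k _ v _ => sq_nonneg _) ?_
    intro k hk _
    exact hbig k hk
  · refine integral_bound P _ (fun ω => mtPost_le_one _ _ _ _ _ hl _ _ _)
      (badE n p m ks X ρ us W) (rate p m ks) hs1 hE (fun ω hω => ?_)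
    refine post_bound hks1 hks X hX Qs zs Bs hB hl hρ hDp (W ω) us _ rfl rfl (hgood ω hω) _ _
      ?_ (fun k => if (1 + δ) * rate p m ks < rate p m k then 0
        else 8 * (D + c2 + 2) * rate p m ks) ?_ ?_
    · refine measurableSet_lt measurable_const ?_
      fun_prop
    · intro k _ v hv
      split_ifs with h
      · exact sq_nonneg _
      · rw [enr_sq]
        exact (le_of_lt hv)
    · intro k _ hk1
      split_ifs with h
      · exact hbig k h
      · have hr1 := one_le_rate (m := m) hp hk1
        have := mul_nonneg (sub_pos.mpr hDc).le (zero_le_one.trans hr1)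
        rw [← hc1, ← hc2]
        linarith
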